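/- Entrance law for the interlaced kernel: let n ≥ 1 and define, for t > 0 and (x,y) ∈ W^{n+1,n}, ν^n_t(x,y) = (n!/Z_{n+1}) t^{−(n+1)²/2} exp(−Σ_i x_i²/(2t)) h_{n+1}(x) h_n(y). Then for all s, t > 0 and all (x',y') ∈ W^{n+1,n}, ∫_{W^{n+1,n}} (n!/Z_{n+1}) s^{−(n+1)²/2} exp(−Σ_i x_i²/(2s)) h_{n+1}(x) h_n(y') q^n_t((x,y),(x',y')) dx dy = ν^n_{t+s}(x',y'); equivalently, ∫_{W^{n+1,n}} ν^n_s(w) q^{n,+}_t(w,w') dw = ν^n_{t+s}(w'), where q^{n,+}_t((x,y),(x',y')) = (h_n(y')/h_n(y)) q^n_t((x,y),(x',y')). -/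

import Mathlib

open MeasureTheory Real

/-- The centered Gaussian density with variance `t`. -/
noncomputable def gauss (t y : ℝ) : ℝ :=
  (Real.sqrt (2 * Real.pi * t))⁻¹ * Real.exp (-y ^ 2 / (2 * t))

/-- The Gaussian cumulative distribution function `Φ_t`. -/
noncomputable def gaussCDF (t y : ℝ) : ℝ := ∫ z in Set.Iic y, gauss t z

/-- The derivative `φ'_t` of the Gaussian density. -/
noncomputable def gaussDeriv (t y : ℝ) : ℝ :=
  -y / Real.sqrt (2 * Real.pi * t ^ 3) * Real.exp (-y ^ 2 / (2 * t))

/-- The kernel `q^n_t((x,y),(x',y'))`, a `(2n+1)×(2n+1)` block determinant. -/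
noncomputable def qKer (n : ℕ) (t : ℝ) (x x' : Fin (n + 1) → ℝ) (y y' : Fin n → ℝ) : ℝ :=
  Matrix.det (Matrix.fromBlocks
    (Matrix.of fun i j : Fin (n + 1) => gauss t (x' j - x i))
    (Matrix.of fun (i : Fin (n + 1)) (j : Fin n) =>
      gaussCDF t (y' j - x i) - (if (i : ℕ) ≤ (j : ℕ) then (1 : ℝ) else 0))
    (Matrix.of fun (i : Fin n) (j : Fin (n + 1)) => gaussDeriv t (x' j - y i))
    (Matrix.of fun i j : Fin n => gauss t (y' j - y i)))

/-- The Vandermonde product `h_m(z) = ∏_{i<j} (z_j − z_i)`. -/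
noncomputable def vand (m : ℕ) (z : Fin m → ℝ) : ℝ :=
  ∏ j : Fin m, ∏ i ∈ Finset.Iio j, (z j - z i)

/-- The normalising constant `Z_m = (2π)^{m/2} ∏_{j=1}^{m−1} j!`. -/
noncomputable def Zconst (m : ℕ) : ℝ :=
  (2 * Real.pi) ^ ((m : ℝ) / 2) * ∏ j ∈ Finset.range m, (Nat.factorial j : ℝ)

/-- The interlacing region `W^{n+1,n}`. -/
def Wint (n : ℕ) : Set ((Fin (n + 1) → ℝ) × (Fin n → ℝ)) :=
  {w | ∀ i : Fin n, w.1 i.castSucc ≤ w.2 i ∧ w.2 i ≤ w.1 i.succ}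

/-- The entrance law density `ν^n_t(x,y)`. -/
noncomputable def nuLaw (n : ℕ) (t : ℝ) (x : Fin (n + 1) → ℝ) (y : Fin n → ℝ) : ℝ :=
  ((Nat.factorial n : ℝ) / Zconst (n + 1)) * t ^ (-(((n : ℝ) + 1) ^ 2) / 2)
    * Real.exp (-(∑ i, (x i) ^ 2) / (2 * t)) * vand (n + 1) x * vand n y


lemma gauss_eq {t : ℝ} (ht : 0 < t) (y : ℝ) :
    gauss t y = ProbabilityTheory.gaussianPDFReal 0 ⟨t, ht.le⟩ y := by
  simp only [gauss, ProbabilityTheory.gaussianPDFReal, sub_zero]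
  rfl

lemma gauss_cont (t : ℝ) : Continuous (gauss t) := by
  unfold gauss; fun_prop

lemma gaussDeriv_cont (t : ℝ) : Continuous (gaussDeriv t) := by
  unfold gaussDeriv; fun_prop

lemma gauss_int {t : ℝ} (ht : 0 < t) : Integrable (gauss t) := by
  have : gauss t = ProbabilityTheory.gaussianPDFReal 0 ⟨t, ht.le⟩ := funext (gauss_eq ht)
  rw [this]; exact ProbabilityTheory.integrable_gaussianPDFReal _ _

lemma gauss_int_one {t : ℝ} (ht : 0 < t) : ∫ y, gauss t y = 1 := by
  have : gauss t = ProbabilityTheory.gaussianPDFReal 0 ⟨t, ht.le⟩ := funext (gauss_eq ht)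
  rw [this]; exact ProbabilityTheory.integral_gaussianPDFReal_eq_one _
    (fun h => ht.ne' (congrArg NNReal.toReal h))

lemma gauss_nonneg (t y : ℝ) : 0 ≤ gauss t y := by unfold gauss; positivity

lemma gauss_le {t : ℝ} (ht : 0 < t) (y : ℝ) : gauss t y ≤ (Real.sqrt (2 * Real.pi * t))⁻¹ := by
  unfold gauss
  refine mul_le_of_le_one_right (by positivity) (Real.exp_le_one_iff.2 ?_)
  rw [neg_div]; simp; positivity

lemma gaussCDF_nonneg (t y : ℝ) : 0 ≤ gaussCDF t y :=
  integral_nonneg fun z => gauss_nonneg t z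

lemma gaussCDF_le {t : ℝ} (ht : 0 < t) (y : ℝ) : gaussCDF t y ≤ 1 := by
  rw [← gauss_int_one ht]
  exact setIntegral_le_integral (gauss_int ht) (Filter.Eventually.of_forall (gauss_nonneg t))

lemma gaussCDF_sub {t : ℝ} (ht : 0 < t) (a b : ℝ) :
    gaussCDF t b - gaussCDF t a = ∫ z in a..b, gauss t z :=
  intervalIntegral.integral_Iic_sub_Iic (gauss_int ht).integrableOn (gauss_int ht).integrableOn

lemma gaussCDF_cont {t : ℝ} (ht : 0 < t) : Continuous (gaussCDF t) := by
  have : gaussCDF t = fun b => gaussCDF t 0 + ∫ z in (0:ℝ)..b, gauss t z := by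
    funext b; rw [← gaussCDF_sub ht]; ring
  rw [this]
  exact continuous_const.add
    (intervalIntegral.continuous_primitive (fun a b => (gauss_cont t).intervalIntegrable a b) 0)

lemma gauss_hasDeriv {t : ℝ} (ht : 0 < t) (y : ℝ) : HasDerivAt (gauss t) (gaussDeriv t y) y := by
  have h1 : HasDerivAt (fun y : ℝ => -y ^ 2 / (2 * t)) (-(2 * y) / (2 * t)) y := by
    have := ((hasDerivAt_pow 2 y).neg).div_const (2 * t)
    simpa using this
  have h2 := (h1.exp).const_mul (Real.sqrt (2 * Real.pi * t))⁻¹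
  have h3 : Real.sqrt (2 * Real.pi * t ^ 3) = t * Real.sqrt (2 * Real.pi * t) := by
    rw [show 2 * Real.pi * t ^ 3 = t ^ 2 * (2 * Real.pi * t) by ring,
      Real.sqrt_mul (by positivity), Real.sqrt_sq ht.le]
  refine h2.congr_deriv ?_
  unfold gaussDeriv
  rw [h3]
  have : Real.sqrt (2 * Real.pi * t) ≠ 0 := by positivity
  field_simp

lemma int_gaussDeriv {t : ℝ} (ht : 0 < t) (u : ℝ) {a b : ℝ} (hab : a ≤ b) :
    ∫ y in Set.Icc a b, gaussDeriv t (u - y) = gauss t (u - a) - gauss t (u - b) := by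
  rw [integral_Icc_eq_integral_Ioc, ← intervalIntegral.integral_of_le hab,
    intervalIntegral.integral_comp_sub_left (gaussDeriv t) u]
  exact intervalIntegral.integral_eq_sub_of_hasDerivAt (fun x _ => gauss_hasDeriv ht x)
    ((gaussDeriv_cont t).intervalIntegrable _ _)

lemma int_gauss {t : ℝ} (ht : 0 < t) (u : ℝ) {a b : ℝ} (hab : a ≤ b) :
    ∫ y in Set.Icc a b, gauss t (u - y) = gaussCDF t (u - a) - gaussCDF t (u - b) := by
  rw [integral_Icc_eq_integral_Ioc, ← intervalIntegral.integral_of_le hab,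
    intervalIntegral.integral_comp_sub_left (gauss t) u, gaussCDF_sub ht]

lemma gaussDeriv_bdd {t : ℝ} (ht : 0 < t) : ∃ K, ∀ y, |gaussDeriv t y| ≤ K := by
  refine ⟨(1 + 2 * t) / Real.sqrt (2 * Real.pi * t ^ 3), fun y => ?_⟩
  unfold gaussDeriv
  rw [abs_mul, abs_div, abs_neg, abs_of_nonneg (Real.sqrt_nonneg _), Real.abs_exp, div_mul_eq_mul_div]
  gcongr
  have h1 : y ^ 2 / (2 * t) + 1 ≤ Real.exp (y ^ 2 / (2 * t)) := Real.add_one_le_exp _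
  rw [neg_div, Real.exp_neg, ← div_eq_mul_inv, div_le_iff₀ (Real.exp_pos _)]
  have h2 : |y| ≤ (1 + 2 * t) * (y ^ 2 / (2 * t) + 1) := by
    have : y ^ 2 / (2 * t) * (2 * t) = y ^ 2 := by field_simp
    have h3 : 0 ≤ y ^ 2 / (2 * t) := by positivity
    nlinarith [sq_nonneg (|y| - 1), sq_abs y]
  exact h2.trans (by gcongr)

lemma pow_exp_int {b : ℝ} (hb : 0 < b) (k : ℕ) :
    Integrable fun x : ℝ => x ^ k * Real.exp (-b * x ^ 2) := by
  have := integrable_rpow_mul_exp_neg_mul_sq hb (s := k)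
    (by have : (0:ℝ) ≤ k := k.cast_nonneg
        linarith)
  simpa using this

lemma pow_gauss_int {t : ℝ} (ht : 0 < t) (k : ℕ) :
    Integrable fun x : ℝ => x ^ k * gauss t x := by
  have := (pow_exp_int (b := (2 * t)⁻¹) (by positivity) k).const_mul (Real.sqrt (2 * Real.pi * t))⁻¹
  refine this.congr (Filter.Eventually.of_forall fun x => ?_)
  simp only [gauss]
  rw [show -x ^ 2 / (2 * t) = -(2 * t)⁻¹ * x ^ 2 by field_simp]
  ring

open Polynomial in
/-- the moment polynomial -/
noncomputable def momPoly (v : ℝ) (j : ℕ) : ℝ[X] :=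
  ∑ k ∈ Finset.range (j + 1), C ((∫ z, z ^ (j - k) * gauss v z) * (j.choose k : ℝ)) * X ^ k

lemma momPoly_coeff {v : ℝ} (hv : 0 < v) (j : ℕ) : (momPoly v j).coeff j = 1 := by
  simp only [momPoly, Polynomial.finsetSum_coeff, Polynomial.coeff_C_mul, Polynomial.coeff_X_pow]
  simp [gauss_int_one hv]

lemma momPoly_deg_le (v : ℝ) (j : ℕ) : (momPoly v j).natDegree ≤ j := by
  refine Polynomial.natDegree_sum_le_of_forall_le _ _ fun k hk => ?_
  exact (Polynomial.natDegree_C_mul_X_pow_le _ _).trans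
    (Nat.lt_succ_iff.1 (Finset.mem_range.1 hk))

lemma momPoly_monic {v : ℝ} (hv : 0 < v) (j : ℕ) : (momPoly v j).Monic :=
  Polynomial.monic_of_natDegree_le_of_coeff_eq_one j (momPoly_deg_le v j) (momPoly_coeff hv j)

lemma momPoly_deg {v : ℝ} (hv : 0 < v) (j : ℕ) : (momPoly v j).natDegree = j :=
  Polynomial.natDegree_eq_of_le_of_coeff_ne_zero (momPoly_deg_le v j) (by simp [momPoly_coeff hv])

lemma momPoly_eval {v : ℝ} (hv : 0 < v) (j : ℕ) (m : ℝ) :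
    ∫ x, x ^ j * gauss v (x - m) = (momPoly v j).eval m := by
  rw [← integral_add_right_eq_self _ m]
  simp only [add_sub_cancel_right]
  have : ∀ x : ℝ, (x + m) ^ j * gauss v x = ∑ k ∈ Finset.range (j + 1),
      (m ^ k * (j.choose k : ℝ)) * (x ^ (j - k) * gauss v x) := by
    intro x
    rw [add_comm, add_pow, Finset.sum_mul]
    exact Finset.sum_congr rfl fun k _ => by ring
  simp_rw [this]
  rw [integral_finsetSum _ fun k _ => (pow_gauss_int hv _).const_mul _]
  simp only [integral_const_mul, momPoly, Polynomial.eval_finsetSum, Polynomial.eval_mul,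
    Polynomial.eval_C, Polynomial.eval_pow, Polynomial.eval_X]
  exact Finset.sum_congr rfl fun k _ => by ring

/-- completing the square -/
lemma gauss_mul {s t : ℝ} (hs : 0 < s) (ht : 0 < t) (u x : ℝ) :
    Real.exp (-x ^ 2 / (2 * s)) * gauss t (u - x) =
      Real.sqrt (s / (t + s)) * Real.exp (-u ^ 2 / (2 * (t + s))) *
        gauss (s * t / (t + s)) (x - s / (t + s) * u) := by
  unfold gauss
  have h1 : Real.sqrt (s / (t + s)) * (Real.sqrt (2 * Real.pi * (s * t / (t + s))))⁻¹
      = (Real.sqrt (2 * Real.pi * t))⁻¹ := by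
    rw [show 2 * Real.pi * (s * t / (t + s)) = (s / (t + s)) * (2 * Real.pi * t) by ring,
      Real.sqrt_mul (by positivity)]
    have : Real.sqrt (s / (t + s)) ≠ 0 := by positivity
    field_simp
  rw [← h1]
  have h2 : Real.exp (-x ^ 2 / (2 * s)) * Real.exp (-(u - x) ^ 2 / (2 * t)) =
      Real.exp (-u ^ 2 / (2 * (t + s))) *
        Real.exp (-(x - s / (t + s) * u) ^ 2 / (2 * (s * t / (t + s)))) := by
    rw [← Real.exp_add, ← Real.exp_add]
    congr 1
    field_simp
    ring
  linear_combination (Real.sqrt (s / (t + s)) * (Real.sqrt (2 * Real.pi * (s * t / (t + s))))⁻¹) * h2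

lemma vand_eq (m : ℕ) (z : Fin m → ℝ) : vand m z = (Matrix.vandermonde z).det := by
  rw [Matrix.det_vandermonde, vand]
  exact Finset.prod_comm' (by simp)

lemma det_block {n : ℕ} (A : Matrix (Fin (n + 1)) (Fin (n + 1)) ℝ) (B : Matrix (Fin (n + 1)) (Fin n) ℝ) :
    (Matrix.fromBlocks A B (Matrix.of fun i j => A i.castSucc j - A i.succ j)
      (Matrix.of fun i j => B i.castSucc j - B i.succ j + if i = j then 1 else 0)).det = A.det := by
  let L : Matrix (Fin n) (Fin (n + 1)) ℝ :=
    Matrix.of fun i k => (if i.castSucc = k then 1 else 0) - (if i.succ = k then 1 else 0)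
  have : Matrix.fromBlocks A B (Matrix.of fun i j => A i.castSucc j - A i.succ j)
      (Matrix.of fun i j => B i.castSucc j - B i.succ j + if i = j then 1 else 0)
      = Matrix.fromBlocks 1 0 L 1 * Matrix.fromBlocks A B 0 1 := by
    rw [Matrix.fromBlocks_multiply]
    congr 1
    · simp
    · simp
    · ext i j
      simp [L, Matrix.mul_apply, sub_mul, Finset.sum_sub_distrib]
    · ext i j
      simp [L, Matrix.mul_apply, sub_mul, Finset.sum_sub_distrib, Matrix.one_apply]
  rw [this, Matrix.det_mul, Matrix.det_fromBlocks_zero₁₂, Matrix.det_fromBlocks_zero₂₁]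
  simp

lemma det_rows {ι : Type*} [Fintype ι] [DecidableEq ι] (M : Matrix ι ι ℝ) :
    M.det = ∑ σ : Equiv.Perm ι, ((Equiv.Perm.sign σ : ℤ) : ℝ) * ∏ i, M i (σ i) := by
  rw [← Matrix.det_transpose, Matrix.det_apply']
  rfl

lemma det_integrable {ι : Type*} [Fintype ι] [DecidableEq ι] (f : ι → ι → ℝ → ℝ)
    (hf : ∀ i j, Integrable (f i j)) :
    Integrable fun x : ι → ℝ => (Matrix.of fun i j => f i j (x i)).det := by
  simp_rw [det_rows]
  refine integrable_finsetSum _ fun σ _ => Integrable.const_mul ?_ _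
  exact Integrable.fintype_prod (f := fun i => f i (σ i)) fun i => hf i (σ i)

lemma det_integral {ι : Type*} [Fintype ι] [DecidableEq ι] (f : ι → ι → ℝ → ℝ)
    (hf : ∀ i j, Integrable (f i j)) :
    ∫ x : ι → ℝ, (Matrix.of fun i j => f i j (x i)).det =
      (Matrix.of fun i j => ∫ x, f i j x).det := by
  simp_rw [det_rows]
  rw [integral_finsetSum]
  · refine Finset.sum_congr rfl fun σ _ => ?_
    rw [integral_const_mul]
    congr 1
    exact integral_fintype_prod_volume_eq_prod fun i => f i (σ i)
  · intro σ _
    refine Integrable.const_mul ?_ _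
    exact Integrable.fintype_prod (f := fun i => f i (σ i)) fun i => hf i (σ i)

lemma det_block_integral {ι κ : Type*} [Fintype ι] [DecidableEq ι] [Fintype κ] [DecidableEq κ]
    (A : Matrix ι ι ℝ) (B : Matrix ι κ ℝ) (c : κ → ι → ℝ → ℝ) (d : κ → κ → ℝ → ℝ)
    (μ : κ → Measure ℝ) [∀ i, SigmaFinite (μ i)]
    (hc : ∀ i j, Integrable (c i j) (μ i)) (hd : ∀ i j, Integrable (d i j) (μ i)) :
    ∫ y : κ → ℝ, (Matrix.fromBlocks A B (Matrix.of fun i j => c i j (y i))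
        (Matrix.of fun i j => d i j (y i))).det ∂(Measure.pi μ) =
      (Matrix.fromBlocks A B (Matrix.of fun i j => ∫ z, c i j z ∂(μ i))
        (Matrix.of fun i j => ∫ z, d i j z ∂(μ i))).det := by
  let f : κ → ι ⊕ κ → ℝ → ℝ := fun i => Sum.elim (c i) (d i)
  have hf : ∀ i j, Integrable (f i j) (μ i) := by
    rintro i (j | j)
    · exact hc i j
    · exact hd i j
  have h1 : ∀ (y : κ → ℝ) (i : κ) (j : ι ⊕ κ),
      Matrix.fromBlocks A B (Matrix.of fun i j => c i j (y i))
        (Matrix.of fun i j => d i j (y i)) (Sum.inr i) j = f i j (y i) := by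
    rintro y i (j | j) <;> rfl
  have h1' : ∀ (y : κ → ℝ) (i : ι) (j : ι ⊕ κ),
      Matrix.fromBlocks A B (Matrix.of fun i j => c i j (y i))
        (Matrix.of fun i j => d i j (y i)) (Sum.inl i) j = Matrix.fromBlocks A B (0 : Matrix κ ι ℝ) (0 : Matrix κ κ ℝ) (Sum.inl i) j := by
    rintro y i (j | j) <;> rfl
  have h2 : ∀ (i : κ) (j : ι ⊕ κ),
      Matrix.fromBlocks A B (Matrix.of fun i j => ∫ z, c i j z ∂(μ i))
        (Matrix.of fun i j => ∫ z, d i j z ∂(μ i)) (Sum.inr i) j = ∫ z, f i j z ∂(μ i) := by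
    rintro i (j | j) <;> rfl
  have h2' : ∀ (i : ι) (j : ι ⊕ κ),
      Matrix.fromBlocks A B (Matrix.of fun i j => ∫ z, c i j z ∂(μ i))
        (Matrix.of fun i j => ∫ z, d i j z ∂(μ i)) (Sum.inl i) j = Matrix.fromBlocks A B (0 : Matrix κ ι ℝ) (0 : Matrix κ κ ℝ) (Sum.inl i) j := by
    rintro i (j | j) <;> rfl
  simp_rw [det_rows, Fintype.prod_sum_type, h1, h1', h2, h2']
  rw [integral_finsetSum]
  · refine Finset.sum_congr rfl fun σ _ => ?_
    rw [integral_const_mul, integral_const_mul]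
    congr 2
    exact integral_fintype_prod_eq_prod fun i => f i (σ (Sum.inr i))
  · intro σ _
    refine Integrable.const_mul (Integrable.const_mul ?_ _) _
    exact Integrable.fintype_prod (f := fun i => f i (σ (Sum.inr i))) fun i => hf i _

lemma perm_mp {m : ℕ} (σ : Equiv.Perm (Fin m)) :
    ∃ e : (Fin m → ℝ) ≃ᵐ (Fin m → ℝ), (∀ x, e x = x ∘ σ) ∧ MeasurePreserving e := by
  refine ⟨MeasurableEquiv.piCongrLeft (fun _ => ℝ) σ.symm, fun x => ?_,
    volume_measurePreserving_piCongrLeft (fun _ => ℝ) σ.symm⟩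
  funext i
  rw [MeasurableEquiv.coe_piCongrLeft, Equiv.piCongrLeft_apply]
  simp

lemma symmetrize {m : ℕ} (K : (Fin m → ℝ) → ℝ) (hK : Integrable K)
    (h0 : ∀ x, ¬ Function.Injective x → K x = 0) :
    ∫ x, {x : Fin m → ℝ | Monotone x}.indicator
      (fun x => ∑ σ : Equiv.Perm (Fin m), K (x ∘ σ)) x = ∫ x, K x := by
  classical
  have hm : MeasurableSet {x : Fin m → ℝ | Monotone x} := isClosed_monotone.measurableSet
  have hterm : ∀ σ : Equiv.Perm (Fin m),
      Integrable ({x : Fin m → ℝ | Monotone x}.indicator fun x => K (x ∘ σ)) ∧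
      Integrable ({x : Fin m → ℝ | Monotone (x ∘ σ.symm)}.indicator K) ∧
      ∫ x, {x : Fin m → ℝ | Monotone x}.indicator (fun x => K (x ∘ σ)) x =
        ∫ x, {x : Fin m → ℝ | Monotone (x ∘ σ.symm)}.indicator K x := by
    intro σ
    obtain ⟨e, he, hmp⟩ := perm_mp σ
    have hs : {x : Fin m → ℝ | Monotone (x ∘ σ.symm)} = e.symm ⁻¹' {x | Monotone x} := by
      ext x
      have : e.symm x = x ∘ σ.symm := by
        rw [MeasurableEquiv.symm_apply_eq, he]; funext i; simp
      simp [this]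
    have hcomp : ({x : Fin m → ℝ | Monotone x}.indicator fun x => K (x ∘ σ)) =
        ({x : Fin m → ℝ | Monotone (x ∘ σ.symm)}.indicator K) ∘ e := by
      funext x
      have hx : (x ∘ σ) ∘ σ.symm = x := by funext i; simp
      simp [Set.indicator_apply, he, hx]
    have hm' : MeasurableSet {x : Fin m → ℝ | Monotone (x ∘ σ.symm)} := by
      rw [hs]; exact e.symm.measurable hm
    have hi := hK.indicator hm'
    refine ⟨?_, hi, ?_⟩
    · rw [hcomp]; exact (hmp.integrable_comp_emb e.measurableEmbedding).2 hi
    · rw [hcomp]; exact hmp.integral_comp e.measurableEmbedding _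
  have h1 : ∀ x, {x : Fin m → ℝ | Monotone x}.indicator
      (fun x => ∑ σ : Equiv.Perm (Fin m), K (x ∘ σ)) x =
      ∑ σ : Equiv.Perm (Fin m), {x : Fin m → ℝ | Monotone x}.indicator (fun x => K (x ∘ σ)) x := by
    intro x
    by_cases hx : Monotone x <;> simp [hx]
  simp_rw [h1]
  rw [integral_finsetSum _ fun σ _ => (hterm σ).1]
  simp_rw [fun σ => (hterm σ).2.2]
  rw [← integral_finsetSum _ fun σ _ => (hterm σ).2.1]
  refine integral_congr_ae (Filter.Eventually.of_forall fun x => ?_)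
  show ∑ σ : Equiv.Perm (Fin m), {x : Fin m → ℝ | Monotone (x ∘ σ.symm)}.indicator K x = K x
  by_cases hx : Function.Injective x
  · rw [Finset.sum_eq_single (Tuple.sort x).symm]
    · have := Tuple.monotone_sort x
      simp [this]
    · intro σ _ hσ
      refine Set.indicator_of_notMem (fun hmono => hσ ?_) _
      have := Tuple.unique_monotone hmono (Tuple.monotone_sort x)
      have h3 : σ.symm = Tuple.sort x := Equiv.ext fun i => hx (congrFun this i)
      rw [← h3]; simp
    · simp
  · have := h0 x hx
    simp [Set.indicator_apply, this]

lemma weight_int {s t : ℝ} (hs : 0 < s) (ht : 0 < t) (u : ℝ) (j : ℕ) :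
    Integrable fun x : ℝ => (Real.exp (-x ^ 2 / (2 * s)) * gauss t (u - x)) * x ^ j := by
  have h := ((pow_exp_int (b := (2 * s)⁻¹) (by positivity) j).norm).const_mul
    (Real.sqrt (2 * Real.pi * t))⁻¹
  refine h.mono' ?_ (Filter.Eventually.of_forall fun x => ?_)
  · have := gauss_cont t
    exact Continuous.aestronglyMeasurable (by fun_prop)
  · rw [show -x ^ 2 / (2 * s) = -(2 * s)⁻¹ * x ^ 2 by field_simp]
    simp only [norm_mul, Real.norm_eq_abs]
    rw [abs_of_nonneg (gauss_nonneg t (u - x))]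
    have := gauss_le ht (u - x)
    calc _ = gauss t (u - x) * (|x ^ j| * |Real.exp (-(2 * s)⁻¹ * x ^ 2)|) := by ring
      _ ≤ _ := by gcongr

lemma exp_prod {m : ℕ} (s : ℝ) (x : Fin m → ℝ) :
    Real.exp (-(∑ i, (x i) ^ 2) / (2 * s)) = ∏ i, Real.exp (-(x i) ^ 2 / (2 * s)) := by
  rw [← Real.exp_sum, ← Finset.sum_div, Finset.sum_neg_distrib]

lemma K_det {m : ℕ} (s t : ℝ) (x' x : Fin m → ℝ) :
    Real.exp (-(∑ i, (x i) ^ 2) / (2 * s)) * vand m x * ∏ i, gauss t (x' i - x i) =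
    (Matrix.of fun i j : Fin m =>
      (Real.exp (-(x i) ^ 2 / (2 * s)) * gauss t (x' i - x i)) * (x i) ^ (j : ℕ)).det := by
  have := Matrix.det_mul_column
    (fun i => Real.exp (-(x i) ^ 2 / (2 * s)) * gauss t (x' i - x i)) (Matrix.vandermonde x)
  simp only [Matrix.vandermonde_apply] at this
  rw [this, exp_prod, vand_eq, Finset.prod_mul_distrib]
  ring

lemma K_integral {n : ℕ} {s t : ℝ} (hs : 0 < s) (ht : 0 < t) (x' : Fin (n + 1) → ℝ) :
    ∫ x : Fin (n + 1) → ℝ, Real.exp (-(∑ i, (x i) ^ 2) / (2 * s)) * vand (n + 1) x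
        * ∏ i, gauss t (x' i - x i) =
      (s / (t + s)) ^ (((n : ℝ) + 1) ^ 2 / 2) * Real.exp (-(∑ i, (x' i) ^ 2) / (2 * (t + s)))
        * vand (n + 1) x' := by
  simp_rw [K_det]
  rw [det_integral (fun i j x =>
    (Real.exp (-x ^ 2 / (2 * s)) * gauss t (x' i - x)) * x ^ (j : ℕ))
    fun i j => weight_int hs ht _ _]
  have hv : 0 < s * t / (t + s) := by positivity
  have h1 : ∀ (i j : Fin (n + 1)),
      ∫ x, (Real.exp (-x ^ 2 / (2 * s)) * gauss t (x' i - x)) * x ^ (j : ℕ) =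
      (Real.sqrt (s / (t + s)) * Real.exp (-(x' i) ^ 2 / (2 * (t + s)))) *
        (momPoly (s * t / (t + s)) j).eval (s / (t + s) * x' i) := by
    intro i j
    rw [← momPoly_eval hv, ← integral_const_mul]
    congr 1
    funext x
    rw [gauss_mul hs ht]; ring
  simp_rw [h1]
  have h2 := Matrix.det_mul_column
    (fun i => Real.sqrt (s / (t + s)) * Real.exp (-(x' i) ^ 2 / (2 * (t + s))))
    (Matrix.of fun i j : Fin (n + 1) =>
      (momPoly (s * t / (t + s)) j).eval (s / (t + s) * x' i))
  simp only [Matrix.of_apply] at h2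
  rw [h2, ← Matrix.det_eval_matrixOfPolynomials_eq_det_vandermonde
    (fun i => s / (t + s) * x' i) (fun j => momPoly (s * t / (t + s)) j)
    (fun j => momPoly_deg hv j) (fun j => momPoly_monic hv j)]
  have h3 := Matrix.det_mul_row (fun j : Fin (n + 1) => (s / (t + s)) ^ (j : ℕ))
    (Matrix.vandermonde x')
  have h4 : Matrix.vandermonde (fun i => s / (t + s) * x' i) =
      Matrix.of fun i j : Fin (n + 1) => (s / (t + s)) ^ (j : ℕ) * Matrix.vandermonde x' i j := by
    ext i j
    simp [Matrix.vandermonde_apply, mul_pow]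
  rw [h4, h3, ← vand_eq, exp_prod, Finset.prod_mul_distrib]
  have hr : 0 ≤ s / (t + s) := by positivity
  have h5 : (s / (t + s)) ^ (((n : ℝ) + 1) ^ 2 / 2) =
      (∏ _i : Fin (n + 1), Real.sqrt (s / (t + s))) * ∏ j : Fin (n + 1), (s / (t + s)) ^ (j : ℕ) := by
    rw [Finset.prod_pow_eq_pow_sum, Finset.prod_const, Finset.card_univ, Fintype.card_fin,
      Fin.sum_univ_eq_sum_range (fun i => i), Real.sqrt_eq_rpow,
      ← Real.rpow_natCast (_ ^ (1 / 2 : ℝ)), ← Real.rpow_natCast (s / (t + s)), ← Real.rpow_mul hr, ← Real.rpow_add (by positivity)]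
    congr 1
    have := Finset.sum_range_id_mul_two (n + 1)
    have h6 : ((∑ i ∈ Finset.range (n + 1), i : ℕ) : ℝ) * 2 = (n + 1) * n := by
      exact_mod_cast this
    push_cast at h6 ⊢
    linarith
  rw [h5]; ring

lemma vand_perm {m : ℕ} (x : Fin m → ℝ) (σ : Equiv.Perm (Fin m)) :
    vand m (x ∘ σ) = ((Equiv.Perm.sign σ : ℤ) : ℝ) * vand m x := by
  rw [vand_eq, vand_eq, ← Matrix.det_permute]
  rfl

lemma G_eq {m : ℕ} (s t : ℝ) (x' x : Fin m → ℝ) :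
    Real.exp (-(∑ i, (x i) ^ 2) / (2 * s)) * vand m x *
      (Matrix.of fun i j : Fin m => gauss t (x' j - x i)).det =
    ∑ σ : Equiv.Perm (Fin m), Real.exp (-(∑ i, ((x ∘ σ) i) ^ 2) / (2 * s)) * vand m (x ∘ σ)
      * ∏ i, gauss t (x' i - (x ∘ σ) i) := by
  rw [Matrix.det_apply', Finset.mul_sum]
  refine Finset.sum_congr rfl fun σ _ => ?_
  have : ∑ i, ((x ∘ σ) i) ^ 2 = ∑ i, (x i) ^ 2 := Equiv.sum_comp σ fun i => (x i) ^ 2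
  rw [this, vand_perm]
  simp only [Matrix.of_apply, Function.comp]
  ring

lemma vand_cont (m : ℕ) : Continuous (vand m) := by unfold vand; fun_prop

lemma qKer_cont {n : ℕ} {t : ℝ} (ht : 0 < t) (x' : Fin (n + 1) → ℝ) (y' : Fin n → ℝ) :
    Continuous fun w : (Fin (n + 1) → ℝ) × (Fin n → ℝ) => qKer n t w.1 x' w.2 y' := by
  have h1 := gauss_cont t
  have h2 := gaussDeriv_cont t
  have h3 := gaussCDF_cont ht
  unfold qKer
  refine Continuous.matrix_det (continuous_matrix ?_)
  rintro (i | i) (j | j) <;> simp <;> fun_prop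

lemma qKer_bdd {n : ℕ} {t : ℝ} (ht : 0 < t) (x' : Fin (n + 1) → ℝ) (y' : Fin n → ℝ) :
    ∃ K, ∀ x y, |qKer n t x x' y y'| ≤ K := by
  obtain ⟨M, hM⟩ := gaussDeriv_bdd ht
  set M' := max M (max 1 (Real.sqrt (2 * Real.pi * t))⁻¹)
  refine ⟨_, fun x y => Matrix.det_le (abv := AbsoluteValue.abs) (x := M') ?_⟩
  rintro (i | i) (j | j) <;> simp only [AbsoluteValue.abs_apply, Matrix.fromBlocks_apply₁₁,
    Matrix.fromBlocks_apply₁₂, Matrix.fromBlocks_apply₂₁, Matrix.fromBlocks_apply₂₂, Matrix.of_apply]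
  · rw [abs_of_nonneg (gauss_nonneg _ _)]
    exact (gauss_le ht _).trans ((le_max_right _ _).trans (le_max_right _ _))
  · refine le_trans ?_ ((le_max_left 1 _).trans (le_max_right _ _))
    have h1 := gaussCDF_nonneg t (y' j - x i)
    have h2 := gaussCDF_le ht (y' j - x i)
    rw [abs_le]
    split_ifs <;> constructor <;> linarith
  · exact (hM _).trans (le_max_left _ _)
  · rw [abs_of_nonneg (gauss_nonneg _ _)]
    exact (gauss_le ht _).trans ((le_max_right _ _).trans (le_max_right _ _))

lemma Wint_meas (n : ℕ) : MeasurableSet (Wint n) := by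
  apply IsClosed.measurableSet
  have : Wint n = ⋂ i : Fin n, ({w | w.1 i.castSucc ≤ w.2 i} ∩ {w | w.2 i ≤ w.1 i.succ}) := by
    ext w; simp [Wint]
  rw [this]
  refine isClosed_iInter fun i => IsClosed.inter ?_ ?_
  · exact isClosed_le (by fun_prop) (by fun_prop)
  · exact isClosed_le (by fun_prop) (by fun_prop)

lemma Wint_sq {n : ℕ} {x : Fin (n + 1) → ℝ} {y : Fin n → ℝ} (h : (x, y) ∈ Wint n) :
    ∑ i, (y i) ^ 2 ≤ 2 * ∑ i, (x i) ^ 2 := by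
  have h1 : ∑ i, (y i) ^ 2 ≤ ∑ i : Fin n, ((x i.castSucc) ^ 2 + (x i.succ) ^ 2) := by
    refine Finset.sum_le_sum fun i _ => ?_
    obtain ⟨ha, hb⟩ := h i
    simp only at ha hb
    rcases le_total 0 (y i) with h0 | h0
    · nlinarith [sq_nonneg (x i.castSucc)]
    · nlinarith [sq_nonneg (x i.succ)]
  rw [Finset.sum_add_distrib] at h1
  have h2 := Fin.sum_univ_castSucc fun i => (x i) ^ 2
  have h3 := Fin.sum_univ_succ fun i => (x i) ^ 2
  nlinarith [sq_nonneg (x 0), sq_nonneg (x (Fin.last n))]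

lemma vand_exp_int {m : ℕ} {b : ℝ} (hb : 0 < b) :
    Integrable fun x : Fin m → ℝ => Real.exp (-(∑ i, (x i) ^ 2) / (2 * b)) * vand m x := by
  have := det_integrable (fun (_ j : Fin m) x => Real.exp (-x ^ 2 / (2 * b)) * x ^ (j : ℕ))
    fun i j => by
      refine (pow_exp_int (b := (2 * b)⁻¹) (by positivity) j).congr
        (Filter.Eventually.of_forall fun x => ?_)
      simp only
      rw [show -x ^ 2 / (2 * b) = -(2 * b)⁻¹ * x ^ 2 by field_simp]
      ring
  refine this.congr (Filter.Eventually.of_forall fun x => ?_)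
  have := Matrix.det_mul_column (fun i => Real.exp (-(x i) ^ 2 / (2 * b))) (Matrix.vandermonde x)
  simp only [Matrix.vandermonde_apply] at this
  simp only
  rw [this, exp_prod, vand_eq]

lemma exp_int {m : ℕ} {b : ℝ} (hb : 0 < b) :
    Integrable fun x : Fin m → ℝ => Real.exp (-(∑ i, (x i) ^ 2) / (2 * b)) := by
  simp_rw [exp_prod]
  refine Integrable.fintype_prod (f := fun _ x => Real.exp (-x ^ 2 / (2 * b))) fun i => ?_
  refine (pow_exp_int (b := (2 * b)⁻¹) (by positivity) 0).congr
        (Filter.Eventually.of_forall fun x => ?_)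
  simp only
  rw [show -x ^ 2 / (2 * b) = -(2 * b)⁻¹ * x ^ 2 by field_simp]
  ring

lemma F_int {n : ℕ} {s t : ℝ} (hs : 0 < s) (ht : 0 < t)
    (x' : Fin (n + 1) → ℝ) (y' : Fin n → ℝ) :
    IntegrableOn (fun w : (Fin (n + 1) → ℝ) × (Fin n → ℝ) =>
      Real.exp (-(∑ i, (w.1 i) ^ 2) / (2 * s)) * vand (n + 1) w.1 * qKer n t w.1 x' w.2 y')
      (Wint n) := by
  obtain ⟨K, hK⟩ := qKer_bdd ht x' y'
  have hg := (((vand_exp_int (m := n + 1) (b := 2 * s) (by positivity)).norm).mul_prod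
    (exp_int (m := n) (b := 4 * s) (by positivity))).mul_const K
  refine Integrable.mono' (hg.restrict (s := Wint n)) ?_ ?_
  · have h1 := qKer_cont ht x' y'
    have h2 := vand_cont (n + 1)
    exact Continuous.aestronglyMeasurable (by fun_prop)
  · refine (ae_restrict_iff' (Wint_meas n)).2 (Filter.Eventually.of_forall ?_)
    rintro ⟨x, y⟩ hw
    have hsq := Wint_sq hw
    simp only [norm_mul, Real.norm_eq_abs, Real.abs_exp]
    have he : Real.exp (-(∑ i, (x i) ^ 2) / (2 * s)) ≤
        Real.exp (-(∑ i, (x i) ^ 2) / (2 * (2 * s))) * Real.exp (-(∑ i, (y i) ^ 2) / (2 * (4 * s))) := by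
      rw [← Real.exp_add, Real.exp_le_exp, div_add_div _ _ (by positivity) (by positivity),
        div_le_div_iff₀ (by positivity) (by positivity)]
      have : 0 < s ^ 3 := by positivity
      nlinarith [mul_le_mul_of_nonneg_left hsq this.le]
    calc _ ≤ (Real.exp (-(∑ i, (x i) ^ 2) / (2 * (2 * s))) *
          Real.exp (-(∑ i, (y i) ^ 2) / (2 * (4 * s)))) * |vand (n + 1) x| * K := by
            gcongr
            exact hK x y
      _ = _ := by ring

lemma inner_int {n : ℕ} {t : ℝ} (ht : 0 < t)
    (x' : Fin (n + 1) → ℝ) (y' : Fin n → ℝ) (x : Fin (n + 1) → ℝ) (hx : Monotone x) :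
    ∫ y in Set.univ.pi fun i : Fin n => Set.Icc (x i.castSucc) (x i.succ), qKer n t x x' y y' =
      (Matrix.of fun i j => gauss t (x' j - x i)).det := by
  have h1 := gauss_cont t
  have h2 := gaussDeriv_cont t
  rw [volume_pi, Measure.restrict_pi_pi]
  unfold qKer
  rw [det_block_integral _ _ (fun _ j z => gaussDeriv t (x' j - z)) (fun _ j z => gauss t (y' j - z))]
  · have hle : ∀ i : Fin n, x i.castSucc ≤ x i.succ := fun i => hx (Fin.castSucc_le_succ i)
    simp_rw [fun (u : ℝ) (i : Fin n) => int_gaussDeriv ht u (hle i),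
      fun (u : ℝ) (i : Fin n) => int_gauss ht u (hle i)]
    rw [← det_block _ (Matrix.of fun (i : Fin (n + 1)) (j : Fin n) =>
      gaussCDF t (y' j - x i) - (if (i : ℕ) ≤ (j : ℕ) then (1 : ℝ) else 0))]
    congr 2
    ext i j
    simp only [Matrix.of_apply, Fin.val_castSucc, Fin.val_succ, Fin.ext_iff]
    split_ifs <;> first | omega | ring
  · intro i j
    exact Continuous.integrableOn_Icc (by fun_prop)
  · intro i j
    exact Continuous.integrableOn_Icc (by fun_prop)

lemma core {n : ℕ} {s t : ℝ} (hs : 0 < s) (ht : 0 < t)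
    (x' : Fin (n + 1) → ℝ) (y' : Fin n → ℝ) :
    ∫ w in Wint n, Real.exp (-(∑ i, (w.1 i) ^ 2) / (2 * s)) * vand (n + 1) w.1
        * qKer n t w.1 x' w.2 y' =
      (s / (t + s)) ^ (((n : ℝ) + 1) ^ 2 / 2) * Real.exp (-(∑ i, (x' i) ^ 2) / (2 * (t + s)))
        * vand (n + 1) x' := by
  rw [← K_integral hs ht x', ← symmetrize]
  · rw [← integral_indicator (Wint_meas n), Measure.volume_eq_prod, integral_prod]
    · congr 1
      funext x
      simp_rw [← G_eq]
      have hsec : ∀ y, (Wint n).indicator (fun w : (Fin (n + 1) → ℝ) × (Fin n → ℝ) =>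
          Real.exp (-(∑ i, (w.1 i) ^ 2) / (2 * s)) * vand (n + 1) w.1
            * qKer n t w.1 x' w.2 y') (x, y) =
          (Set.univ.pi fun i : Fin n => Set.Icc (x i.castSucc) (x i.succ)).indicator
          (fun y => Real.exp (-(∑ i, (x i) ^ 2) / (2 * s)) * vand (n + 1) x
            * qKer n t x x' y y') y := by
        intro y
        have : (x, y) ∈ Wint n ↔
            y ∈ Set.univ.pi fun i : Fin n => Set.Icc (x i.castSucc) (x i.succ) := by
          simp only [Wint, Set.mem_ofPred_eq, Set.mem_pi, Set.mem_univ, Set.mem_Icc, true_implies]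
        classical
        simp only [Set.indicator_apply, this]
      simp_rw [hsec]
      rw [integral_indicator (MeasurableSet.univ_pi fun i => measurableSet_Icc),
        integral_const_mul]
      by_cases hx : Monotone x
      · rw [inner_int ht x' y' x hx, Set.indicator_of_mem hx]
      · rw [Set.indicator_of_notMem hx]
        have : (Set.univ.pi fun i : Fin n => Set.Icc (x i.castSucc) (x i.succ)) = ∅ := by
          rw [Fin.monotone_iff_le_succ] at hx
          push Not at hx
          obtain ⟨i, hi⟩ := hx
          exact Set.univ_pi_eq_empty (i := i) (Set.Icc_eq_empty (not_le.2 hi))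
        rw [this]; simp
    · rw [← Measure.volume_eq_prod]
      exact (integrable_indicator_iff (Wint_meas n)).2 (F_int hs ht x' y')
  · simp_rw [K_det]
    exact det_integrable (fun i (j : Fin (n + 1)) x =>
      (Real.exp (-x ^ 2 / (2 * s)) * gauss t (x' i - x)) * x ^ (j : ℕ))
      fun i j => weight_int hs ht _ _
  · intro x hx
    have : vand (n + 1) x = 0 := by
      rw [vand_eq]
      by_contra h
      exact hx (Matrix.det_vandermonde_ne_zero_iff.1 h)
    rw [this]; ring

/-- `(ν^n_t)_{t>0}` is an entrance law for the kernel `q^{n,+}_t`: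
`∫_{W^{n+1,n}} ν^n_s(x,y) (h_n(y')/h_n(y)) q^n_t((x,y),(x',y')) dx dy = ν^n_{t+s}(x',y')`,
written in the division-free form where `ν^n_s(x,y) (h_n(y')/h_n(y))`
is replaced by `(n!/Z_{n+1}) s^{−(n+1)²/2} exp(−Σ_i x_i²/(2s)) h_{n+1}(x) h_n(y')`. -/
theorem stmt9 (n : ℕ) (hn : 1 ≤ n) (s t : ℝ) (hs : 0 < s) (ht : 0 < t)
    (x' : Fin (n + 1) → ℝ) (y' : Fin n → ℝ) (hw' : (x', y') ∈ Wint n) :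
    ∫ w in Wint n,
        ((Nat.factorial n : ℝ) / Zconst (n + 1)) * s ^ (-(((n : ℝ) + 1) ^ 2) / 2)
          * Real.exp (-(∑ i, (w.1 i) ^ 2) / (2 * s)) * vand (n + 1) w.1 * vand n y'
          * qKer n t w.1 x' w.2 y'
      = nuLaw n (t + s) x' y' := by
  have h1 : ∀ w : (Fin (n + 1) → ℝ) × (Fin n → ℝ),
      ((Nat.factorial n : ℝ) / Zconst (n + 1)) * s ^ (-(((n : ℝ) + 1) ^ 2) / 2)
          * Real.exp (-(∑ i, (w.1 i) ^ 2) / (2 * s)) * vand (n + 1) w.1 * vand n y'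
          * qKer n t w.1 x' w.2 y' =
      (((Nat.factorial n : ℝ) / Zconst (n + 1)) * s ^ (-(((n : ℝ) + 1) ^ 2) / 2) * vand n y') *
        (Real.exp (-(∑ i, (w.1 i) ^ 2) / (2 * s)) * vand (n + 1) w.1
          * qKer n t w.1 x' w.2 y') := fun w => by ring
  simp_rw [h1]
  rw [integral_const_mul, core hs ht, nuLaw]
  have h2 : s ^ (-(((n : ℝ) + 1) ^ 2) / 2) * (s / (t + s)) ^ (((n : ℝ) + 1) ^ 2 / 2) =
      (t + s) ^ (-(((n : ℝ) + 1) ^ 2) / 2) := by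
    rw [neg_div, Real.div_rpow hs.le (by positivity), Real.rpow_neg hs.le,
      Real.rpow_neg (by positivity)]
    have : s ^ (((n : ℝ) + 1) ^ 2 / 2) ≠ 0 := by positivity
    field_simp
  rw [← h2]
  ring
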